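/- There exist first-order formulas φ_Q(x,u) and φ_R(x,u) over the language with binary relation symbols for < and ◁ and unary relation symbols for C and Q such that for every n ∈ ℕ and all a,b ∈ {0,...,n}, the finite prefix structure ({0,...,n}, <, ◁, C, Q) satisfies φ_Q(a,b) iff bit r(b) of the binary representation of q(a) is 1, and satisfies φ_R(a,b) iff bit r(b) of the binary representation of r(a) is 1. -/

import Mathlib

open FirstOrder Language

/-- `q_i = i(i+1)/2`, the smallest element of column `i`. -/
def qseq (i : ℕ) : ℕ := i * (i + 1) / 2

/-- `c(x)`, the column number of `x`: the largest `i` with `q_i ≤ x`. -/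
def col (x : ℕ) : ℕ := Nat.findGreatest (fun i => qseq i ≤ x) x

/-- `q(x) = q_{c(x)}`, the bottom-most element of the column of `x`. -/
def qf (x : ℕ) : ℕ := qseq (col x)

/-- `r(x) = x - q(x)`, the row number of `x`. -/
def rowf (x : ℕ) : ℕ := x - qf x

/-- The row-major linear order `◁`. -/
def ordc (x y : ℕ) : Prop := rowf x < rowf y ∨ (rowf x = rowf y ∧ col x < col y)

/-- The unary predicate `C`: bit `r(x)` of `c(x)+1` is 1. -/
def Cpred (x : ℕ) : Prop := Nat.testBit (col x + 1) (rowf x) = true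

/-- The unary predicate `Q`: bit `r(x)` of `q_{c(x)+1}` is 1. -/
def Qpred (x : ℕ) : Prop := Nat.testBit (qseq (col x + 1)) (rowf x) = true

/-- Relation symbols of the language with binary `<`, `◁` and unary `C`, `Q`. -/
inductive Rel4 : ℕ → Type
  | lt : Rel4 2
  | ordc : Rel4 2
  | C : Rel4 1
  | Q : Rel4 1

/-- The language with binary relation symbols for `<` and `◁` and unary `C`, `Q`. -/
def L4 : Language := ⟨fun _ => Empty, Rel4⟩

/-- The finite prefix structure `({0,...,n}, <, ◁, C, Q)`. -/
def struct4 (n : ℕ) : L4.Structure (Fin (n + 1)) where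
  funMap := fun f _ => f.elim
  RelMap := fun r v =>
    match r with
    | .lt => (v 0 : ℕ) < (v 1 : ℕ)
    | .ordc => ordc (v 0 : ℕ) (v 1 : ℕ)
    | .C => Cpred (v 0 : ℕ)
    | .Q => Qpred (v 0 : ℕ)

/-!
In coordinates `(col, row)` the natural numbers are the points `(c, r)` with `r ≤ c`, and `<` and
`◁` are the two lexicographic orders. A pair that is increasing in one order but not in the
leading coordinate of the other forces the leading coordinate of the first to grow: this defines
comparison of columns, then comparison of rows, hence successor columns and the diagonal `c = r`.
The predicates `Q` and `C` tabulate the bits of `q(x)` and `c(x)` one column to the left of `x`,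
and the table is long enough because both numbers are less than `2 ^ c(x)`. The bits of `r(x)` are
those of the column number of the diagonal point in the row of `x`, which precedes or equals `x`.
-/

theorem qseq_succ (i : ℕ) : qseq (i + 1) = qseq i + i + 1 := by
  have h : (i + 1) * (i + 1 + 1) = i * (i + 1) + 2 * (i + 1) := by ring
  rw [qseq, qseq, h]
  omega

theorem qseq_strictMono : StrictMono qseq :=
  strictMono_nat_of_lt_succ fun i => by rw [qseq_succ]; omega

theorem qseq_lt_two_pow (c : ℕ) : qseq c < 2 ^ c := by
  induction c with
  | zero => simp [qseq]
  | succ c ih =>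
    have hc : c < 2 ^ c := Nat.lt_two_pow_self
    rw [qseq_succ, pow_succ]
    omega

theorem qseq_le_iff_le_col {c x : ℕ} : qseq c ≤ x ↔ c ≤ col x := by
  constructor
  · exact fun h => Nat.le_findGreatest (qseq_strictMono.le_apply.trans h) h
  · intro h
    have hx : qseq (col x) ≤ x :=
      Nat.findGreatest_spec (P := fun i => qseq i ≤ x) (Nat.zero_le x) (by simp [qseq])
    exact (qseq_strictMono.monotone h).trans hx

theorem col_monotone : Monotone col := fun _ _ h =>
  qseq_le_iff_le_col.1 ((qseq_le_iff_le_col.2 le_rfl).trans h)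

theorem qseq_col_add_rowf (x : ℕ) : qseq (col x) + rowf x = x :=
  Nat.add_sub_cancel' (qseq_le_iff_le_col.2 le_rfl)

theorem rowf_le_col (x : ℕ) : rowf x ≤ col x := by
  have hlt : x < qseq (col x + 1) := by
    rw [← not_le, qseq_le_iff_le_col]
    omega
  have hx := qseq_col_add_rowf x
  rw [qseq_succ] at hlt
  omega

theorem col_qseq_add {c r : ℕ} (h : r ≤ c) : col (qseq c + r) = c := by
  refine le_antisymm ?_ (qseq_le_iff_le_col.1 (Nat.le_add_right _ _))
  rw [← Nat.lt_succ_iff, ← not_le, ← qseq_le_iff_le_col, qseq_succ]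
  omega

theorem rowf_qseq_add {c r : ℕ} (h : r ≤ c) : rowf (qseq c + r) = r := by
  rw [rowf, qf, col_qseq_add h, Nat.add_sub_cancel_left]

theorem lt_iff_col_lt_or_rowf_lt (x y : ℕ) :
    x < y ↔ col x < col y ∨ col x = col y ∧ rowf x < rowf y := by
  have hx := qseq_col_add_rowf x
  have hy := qseq_col_add_rowf y
  rcases lt_trichotomy (col x) (col y) with h | h | h
  · have := col_monotone.reflect_lt h
    omega
  · rw [h] at hx
    omega
  · have := col_monotone.reflect_lt h
    omega

section Prefix

variable {n : ℕ}

theorem exists_col_eq_rowf_eq {c r : ℕ} (hr : r ≤ c) (a : Fin (n + 1))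
    (ha : c < col a ∨ c = col a ∧ r ≤ rowf a) :
    ∃ z : Fin (n + 1), col z = c ∧ rowf z = r := by
  have hle : qseq c + r ≤ a := by
    rw [← not_lt, lt_iff_col_lt_or_rowf_lt, col_qseq_add hr, rowf_qseq_add hr]
    omega
  exact ⟨⟨qseq c + r, by omega⟩, col_qseq_add hr, rowf_qseq_add hr⟩

/- The step from the top of column `c` to the bottom of column `c + 1` is a descent from row `c` to
row `0`. It is no descent for `c = 0`, whence the separate case `a = 0`. -/
theorem col_lt_col_iff (a b : Fin (n + 1)) :
    col a < col b ↔ a < b ∧ (a = 0 ∨ ∃ z w, ¬ z < a ∧ z < w ∧ ¬ b < w ∧ ordc w z) := by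
  have hlt (x y : Fin (n + 1)) : x < y ↔ col x < col y ∨ col x = col y ∧ rowf x < rowf y :=
    lt_iff_col_lt_or_rowf_lt x y
  simp only [hlt, ordc]
  constructor
  · intro h
    refine ⟨Or.inl h, or_iff_not_imp_left.2 fun ha => ?_⟩
    have hcol : 1 ≤ col a := qseq_le_iff_le_col.1 (Fin.pos_iff_ne_zero.2 ha)
    obtain ⟨top, htop⟩ := exists_col_eq_rowf_eq (le_refl (col a)) b (by omega)
    obtain ⟨bot, hbot⟩ := exists_col_eq_rowf_eq (Nat.zero_le (col a + 1)) b (by omega)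
    have hrow := rowf_le_col a
    exact ⟨top, bot, by omega⟩
  · rintro ⟨hab, rfl | ⟨z, w, h⟩⟩
    · have hcol : col (0 : Fin (n + 1)) = 0 := rfl
      have hrow := rowf_le_col b
      omega
    · omega

theorem col_add_one_eq_col_iff (a b : Fin (n + 1)) :
    col a + 1 = col b ↔ col a < col b ∧ ¬ ∃ z : Fin (n + 1), col a < col z ∧ col z < col b := by
  constructor
  · intro h
    exact ⟨by omega, by rintro ⟨z, hz⟩; omega⟩
  · rintro ⟨hlt, hnone⟩
    obtain ⟨z, hz, -⟩ := exists_col_eq_rowf_eq (Nat.zero_le (col a + 1)) b (by omega)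
    by_contra hne
    exact hnone ⟨z, by omega⟩

/- The diagonal point of the row of `b` serves as `w`. Then `z` is `a` itself if its column is not
to the left of `w`, and otherwise the point just below `w`. -/
theorem rowf_lt_rowf_iff (a b : Fin (n + 1)) :
    rowf a < rowf b ↔
      ∃ z w : Fin (n + 1), ¬ ordc z a ∧ ordc z w ∧ ¬ ordc b w ∧ ¬ col z < col w := by
  simp only [ordc]
  constructor
  · intro h
    have hb := rowf_le_col b
    obtain ⟨diag, hdiag⟩ := exists_col_eq_rowf_eq (le_refl (rowf b)) b (by omega)
    by_cases ha : rowf b ≤ col a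
    · exact ⟨a, diag, by omega⟩
    · obtain ⟨below, hbelow⟩ := exists_col_eq_rowf_eq (Nat.sub_le (rowf b) 1) b (by omega)
      exact ⟨below, diag, by omega⟩
  · rintro ⟨z, w, h⟩
    omega

theorem exists_rowf_eq_and_col_eq_rowf (a : Fin (n + 1)) :
    ∃ d : Fin (n + 1), rowf d = rowf a ∧ col d = rowf d := by
  have ha := rowf_le_col a
  obtain ⟨d, hcol, hrow⟩ := exists_col_eq_rowf_eq (le_refl (rowf a)) a (by omega)
  exact ⟨d, hrow, hcol.trans hrow.symm⟩

theorem col_eq_rowf_iff (a : Fin (n + 1)) :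
    col a = rowf a ↔ ¬ ∃ e : Fin (n + 1), rowf e = rowf a ∧ col e < col a := by
  constructor
  · rintro h ⟨e, he⟩
    have := rowf_le_col e
    omega
  · intro h
    have ha := rowf_le_col a
    obtain ⟨d, hd⟩ := exists_rowf_eq_and_col_eq_rowf a
    by_contra hne
    exact h ⟨d, by omega⟩

theorem testBit_apply_col_iff {f : ℕ → ℕ} (hf : ∀ c, f c < 2 ^ c) (a b : Fin (n + 1)) :
    (f (col a)).testBit (rowf b) ↔
      ∃ y : Fin (n + 1), col y + 1 = col a ∧ rowf y = rowf b ∧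
        (f (col y + 1)).testBit (rowf y) := by
  constructor
  · intro h
    have hlt : rowf b < col a :=
      (Nat.pow_lt_pow_iff_right one_lt_two).1 ((Nat.ge_two_pow_of_testBit h).trans_lt (hf _))
    obtain ⟨y, hcol, hrow⟩ :=
      exists_col_eq_rowf_eq (c := col a - 1) (r := rowf b) (by omega) a (by omega)
    have hsucc : col y + 1 = col a := by omega
    exact ⟨y, hsucc, hrow, by rwa [hsucc, hrow]⟩
  · rintro ⟨y, hcol, hrow, h⟩
    rwa [hcol, hrow] at h

theorem testBit_rowf_iff (a b : Fin (n + 1)) :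
    (rowf a).testBit (rowf b) ↔
      ∃ d : Fin (n + 1), rowf d = rowf a ∧ col d = rowf d ∧ (col d).testBit (rowf b) := by
  constructor
  · intro h
    obtain ⟨d, hrow, hdiag⟩ := exists_rowf_eq_and_col_eq_rowf a
    exact ⟨d, hrow, hdiag, by rwa [hdiag, hrow]⟩
  · rintro ⟨d, hrow, hdiag, h⟩
    rwa [hdiag, hrow] at h

end Prefix

/-- One first-order formula defines the relation `P i`, between elements indexed by the variables
`α`, in each structure `S i` of a family. The structures are explicit arguments because
`struct4` is not an instance. -/
def UniformlyDefinable {L : Language} {ι α : Type*} {M : ι → Type*} (S : ∀ i, L.Structure (M i))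
    (P : ∀ i, (α → M i) → Prop) : Prop :=
  ∃ φ : L.Formula α, ∀ i v, (letI := S i; φ.Realize v) ↔ P i v

namespace UniformlyDefinable

variable {L : Language} {ι α : Type*} {M : ι → Type*} {S : ∀ i, L.Structure (M i)}
  {P P' : ∀ i, (α → M i) → Prop}

protected theorem congr (h : UniformlyDefinable S P) (e : ∀ i v, P' i v ↔ P i v) :
    UniformlyDefinable S P' :=
  let ⟨φ, hφ⟩ := h
  ⟨φ, fun i v => (hφ i v).trans (e i v).symm⟩

theorem rel {k : ℕ} (R : L.Relations k) (x : Fin k → α) :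
    UniformlyDefinable S fun _ v => Structure.RelMap R (v ∘ x) :=
  ⟨R.formula fun j => Term.var (x j), fun _ _ => Formula.realize_rel⟩

protected theorem not (h : UniformlyDefinable S P) : UniformlyDefinable S fun i v => ¬ P i v :=
  let ⟨φ, hφ⟩ := h
  ⟨φ.not, fun i v => Formula.realize_not.trans (hφ i v).not⟩

protected theorem and (h : UniformlyDefinable S P) (h' : UniformlyDefinable S P') :
    UniformlyDefinable S fun i v => P i v ∧ P' i v :=
  let ⟨φ, hφ⟩ := h
  let ⟨φ', hφ'⟩ := h'
  ⟨φ ⊓ φ', fun i v => Formula.realize_inf.trans ((hφ i v).and (hφ' i v))⟩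

protected theorem or (h : UniformlyDefinable S P) (h' : UniformlyDefinable S P') :
    UniformlyDefinable S fun i v => P i v ∨ P' i v :=
  let ⟨φ, hφ⟩ := h
  let ⟨φ', hφ'⟩ := h'
  ⟨φ ⊔ φ', fun i v => Formula.realize_sup.trans ((hφ i v).or (hφ' i v))⟩

/- The variable `none` of `Option α` is the quantified one. -/
theorem ex {P : ∀ i, (α → M i) → M i → Prop}
    (h : UniformlyDefinable S fun i (v : Option α → M i) => P i (v ∘ some) (v none)) :
    UniformlyDefinable S fun i v => ∃ x, P i v x := by
  obtain ⟨φ, hφ⟩ := h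
  refine ⟨(φ.relabel (Equiv.optionEquivSumPUnit.{0} α)).iExs Unit, fun i v => ?_⟩
  have hmatrix (w : Unit → M i) :
      (φ.relabel (Equiv.optionEquivSumPUnit.{0} α)).Realize (Sum.elim v w) ↔ P i v (w ()) :=
    Formula.realize_relabel.trans (hφ i _)
  exact Formula.realize_iExs.trans ((Equiv.funUnique Unit (M i)).exists_congr hmatrix)

end UniformlyDefinable

section PrefixDefinable

/-- Relations that one formula over `<`, `◁`, `C`, `Q` defines in all finite prefix structures. -/
abbrev PrefixDefinable {α : Type*} (P : ∀ n : ℕ, (α → Fin (n + 1)) → Prop) : Prop :=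
  UniformlyDefinable struct4 P

variable {α : Type*}

theorem prefixDefinable_lt (x y : α) : PrefixDefinable fun _ v => v x < v y :=
  .rel (L := L4) Rel4.lt ![x, y]

theorem prefixDefinable_ordc (x y : α) : PrefixDefinable fun _ v => ordc (v x) (v y) :=
  .rel (L := L4) Rel4.ordc ![x, y]

theorem prefixDefinable_Cpred (x : α) : PrefixDefinable fun _ v => Cpred (v x) :=
  .rel (L := L4) Rel4.C ![x]

theorem prefixDefinable_Qpred (x : α) : PrefixDefinable fun _ v => Qpred (v x) :=
  .rel (L := L4) Rel4.Q ![x]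

theorem prefixDefinable_eq_zero (x : α) : PrefixDefinable fun _ v => v x = 0 := by
  have h : PrefixDefinable fun _ v => ∃ y, y < v x := .ex (prefixDefinable_lt none (some x))
  refine h.not.congr fun n v => ?_
  rw [not_exists, ← isMin_iff_forall_not_lt, isMin_iff_eq_bot]
  rfl

theorem prefixDefinable_col_lt_col (x y : α) :
    PrefixDefinable fun _ v => col (v x) < col (v y) := by
  refine .congr (.and (prefixDefinable_lt x y) (.or (prefixDefinable_eq_zero x) (.ex (.ex ?_))))
    fun n v => col_lt_col_iff (v x) (v y)
  let z : Option (Option α) := some none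
  let w : Option (Option α) := none
  exact (prefixDefinable_lt z (some (some x))).not.and <| (prefixDefinable_lt z w).and <|
    (prefixDefinable_lt (some (some y)) w).not.and (prefixDefinable_ordc w z)

theorem prefixDefinable_col_add_one_eq_col (x y : α) :
    PrefixDefinable fun _ v => col (v x) + 1 = col (v y) :=
  .congr (.and (prefixDefinable_col_lt_col x y) <| .not <| .ex <|
      (prefixDefinable_col_lt_col (some x) none).and (prefixDefinable_col_lt_col none (some y)))
    fun _ v => col_add_one_eq_col_iff (v x) (v y)

theorem prefixDefinable_rowf_lt_rowf (x y : α) :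
    PrefixDefinable fun _ v => rowf (v x) < rowf (v y) := by
  refine .congr (.ex (.ex ?_)) fun n v => rowf_lt_rowf_iff (v x) (v y)
  let z : Option (Option α) := some none
  let w : Option (Option α) := none
  exact (prefixDefinable_ordc z (some (some x))).not.and <| (prefixDefinable_ordc z w).and <|
    (prefixDefinable_ordc (some (some y)) w).not.and (prefixDefinable_col_lt_col z w).not

theorem prefixDefinable_rowf_eq_rowf (x y : α) :
    PrefixDefinable fun _ v => rowf (v x) = rowf (v y) :=
  .congr ((prefixDefinable_rowf_lt_rowf x y).not.and (prefixDefinable_rowf_lt_rowf y x).not)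
    fun n v => by omega

theorem prefixDefinable_col_eq_rowf (x : α) :
    PrefixDefinable fun _ v => col (v x) = rowf (v x) :=
  .congr (.not <| .ex <|
      (prefixDefinable_rowf_eq_rowf none (some x)).and (prefixDefinable_col_lt_col none (some x)))
    fun _ v => col_eq_rowf_iff (v x)

theorem prefixDefinable_testBit_apply_col {f : ℕ → ℕ} (hf : ∀ c, f c < 2 ^ c)
    (hbit : PrefixDefinable fun _ (v : Option α → _) =>
      (f (col (v none) + 1)).testBit (rowf (v none))) (x u : α) :
    PrefixDefinable fun _ v => (f (col (v x))).testBit (rowf (v u)) :=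
  .congr (.ex <| (prefixDefinable_col_add_one_eq_col none (some x)).and <|
      (prefixDefinable_rowf_eq_rowf none (some u)).and hbit)
    fun _ v => testBit_apply_col_iff hf (v x) (v u)

theorem prefixDefinable_testBit_qf (x u : α) :
    PrefixDefinable fun _ v => (qf (v x)).testBit (rowf (v u)) :=
  prefixDefinable_testBit_apply_col qseq_lt_two_pow (prefixDefinable_Qpred none) x u

theorem prefixDefinable_testBit_col (x u : α) :
    PrefixDefinable fun _ v => (col (v x)).testBit (rowf (v u)) :=
  prefixDefinable_testBit_apply_col (f := id) (fun _ => Nat.lt_two_pow_self)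
    (prefixDefinable_Cpred none) x u

theorem prefixDefinable_testBit_rowf (x u : α) :
    PrefixDefinable fun _ v => (rowf (v x)).testBit (rowf (v u)) :=
  .congr (.ex <| (prefixDefinable_rowf_eq_rowf none (some x)).and <|
      (prefixDefinable_col_eq_rowf none).and (prefixDefinable_testBit_col none (some u)))
    fun _ v => testBit_rowf_iff (v x) (v u)

end PrefixDefinable

/-- Lemma 3.4: there are FO(<,◁,C,Q)-formulas `φQ(x,u)` and `φR(x,u)`
expressing that bit `r(u)` of `q(x)`, respectively of `r(x)`, is 1. -/
theorem lt_ordc_C_Q_define_bits_of_q_and_r :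
    ∃ (φQ φR : L4.Formula (Fin 2)),
      ∀ n : ℕ,
        letI := struct4 n
        ∀ a b : Fin (n + 1),
          (φQ.Realize ![a, b] ↔ Nat.testBit (qf (a : ℕ)) (rowf (b : ℕ)) = true) ∧
          (φR.Realize ![a, b] ↔ Nat.testBit (rowf (a : ℕ)) (rowf (b : ℕ)) = true) := by
  obtain ⟨φQ, hQ⟩ := prefixDefinable_testBit_qf (0 : Fin 2) 1
  obtain ⟨φR, hR⟩ := prefixDefinable_testBit_rowf (0 : Fin 2) 1
  exact ⟨φQ, φR, fun n a b => ⟨hQ n ![a, b], hR n ![a, b]⟩⟩
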